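/- Let X be a compact Hausdorff space, M ≺ H(κ) countable with X ∈ M, and L = 2^X ∩ M. Then X is a C-space if and only if the Wallman space wL is a C-space. -/

import Mathlib

open Set TopologicalSpace FirstOrder

universe u v

/-- `U` is a cover of `X` by open sets. -/
def IsOpenCover {X : Type u} [TopologicalSpace X] (U : Set (Set X)) : Prop :=
  (∀ s ∈ U, IsOpen s) ∧ ⋃₀ U = Set.univ

/-- `V` refines `U`: every member of `V` is contained in some member of `U`. -/
def Refines {X : Type u} (V U : Set (Set X)) : Prop :=
  ∀ v ∈ V, ∃ u ∈ U, v ⊆ u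

/-- `X` is a C-space (has property C): every sequence of open covers admits a sequence of
families of pairwise disjoint open sets, the `i`-th refining the `i`-th cover, whose union
covers `X`. -/
def IsCSpace (X : Type u) [TopologicalSpace X] : Prop :=
  ∀ U : ℕ → Set (Set X), (∀ i, IsOpenCover (U i)) →
    ∃ V : ℕ → Set (Set X),
      (∀ i, (∀ s ∈ V i, IsOpen s) ∧ (V i).PairwiseDisjoint id ∧ Refines (V i) (U i)) ∧
      (⋃ i, ⋃₀ (V i)) = Set.univ

/-- `X` is an `m`-C-space: property C restricted to `m`-element open covers. -/
def IsMCSpace (m : ℕ) (X : Type u) [TopologicalSpace X] : Prop :=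
  ∀ U : ℕ → Fin m → Set X, (∀ i j, IsOpen (U i j)) → (∀ i, (⋃ j, U i j) = Set.univ) →
    ∃ V : ℕ → Set (Set X),
      (∀ i, (∀ s ∈ V i, IsOpen s) ∧ (V i).PairwiseDisjoint id ∧ ∀ v ∈ V i, ∃ j, v ⊆ U i j) ∧
      (⋃ i, ⋃₀ (V i)) = Set.univ

/-- An ultrafilter on a lattice `F` of subsets of `α` (in the Wallman sense): a proper filter
on `F` such that every member of `F` meeting all members of the filter belongs to it. -/
structure LUltra {α : Type u} (F : Set (Set α)) where
  sets : Set (Set α)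
  sets_subset : sets ⊆ F
  univ_mem : Set.univ ∈ sets
  empty_notMem : ∅ ∉ sets
  inter_mem : ∀ a ∈ sets, ∀ b ∈ sets, a ∩ b ∈ sets
  superset_mem : ∀ a ∈ sets, ∀ b ∈ F, a ⊆ b → b ∈ sets
  ultra : ∀ a ∈ F, a ∉ sets → ∃ b ∈ sets, a ∩ b = ∅

/-- The Wallman topology: the sets `â = {u : a ∈ u}`, `a ∈ F`, form a base for closed sets. -/
instance LUltra.instTopologicalSpace {α : Type u} (F : Set (Set α)) :
    TopologicalSpace (LUltra F) :=
  TopologicalSpace.generateFrom {s | ∃ a ∈ F, s = {u : LUltra F | a ∈ u.sets}ᶜ}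

/-- `x ∈ H(κ)`: `x` hereditarily has cardinality `< κ` (for regular `κ` this agrees with
`|TC(x)| < κ`). -/
def HeredLt (κ : Cardinal.{1}) (x : ZFSet.{0}) : Prop :=
  ZFSet.mem_wf.fix (fun x ih => Cardinal.mk x.toSet < κ ∧ ∀ y, ∀ h : y ∈ x, ih y h) x

/-- `ZFSet` as a structure for the language with one binary relation, interpreted as `∈`. -/
instance ZFSet.memLangStructure : FirstOrder.Language.graph.Structure ZFSet.{0} where
  funMap := fun {_} f => isEmptyElim f
  RelMap := fun {_} r => match r with | .adj => fun x => x 0 ∈ x 1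

/-- `H(κ)` as a substructure of the universe of sets with membership. -/
def HKappa (κ : Cardinal.{1}) : FirstOrder.Language.graph.Substructure ZFSet.{0} where
  carrier := {x | HeredLt κ x}
  fun_mem := fun {_} f => isEmptyElim f

/-- `z` belongs to the elementary submodel `M ≺ H(κ)`. -/
def MemOf (κ : Cardinal.{1})
    (M : FirstOrder.Language.graph.ElementarySubstructure (HKappa κ))
    (z : ZFSet.{0}) : Prop :=
  ∃ h : z ∈ HKappa κ, (⟨z, h⟩ : HKappa κ) ∈ M

/-- The ZF-set coding a subset `A` of (the extension of) the ZF-set `X`. -/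
noncomputable def codeSet (X : ZFSet.{0}) (A : Set ↥X.toSet) : ZFSet.{0} :=
  ZFSet.sep (fun y => ∃ h : y ∈ X.toSet, (⟨y, h⟩ : ↥X.toSet) ∈ A) X

/-- The subset of `X` decoded from a ZF-set `t`. -/
def decodeSet (X : ZFSet.{0}) (t : ZFSet.{0}) : Set ↥X.toSet :=
  {p : ↥X.toSet | (p : ZFSet) ∈ t}

/-- The ZF-set coding the topology of the space `X`: the set of codes of open subsets. -/
noncomputable def opensZ (X : ZFSet.{0}) [TopologicalSpace ↥X.toSet] : ZFSet.{0} :=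
  ZFSet.sep (fun t => IsOpen (decodeSet X t)) X.powerset

/-- The lattice `L = 2^X ∩ M`: the closed subsets of `X` whose codes belong to `M`. -/
def Lfam (X : ZFSet.{0}) [TopologicalSpace ↥X.toSet] (κ : Cardinal.{1})
    (M : FirstOrder.Language.graph.ElementarySubstructure (HKappa κ)) :
    Set (Set ↥X.toSet) :=
  {A | IsClosed A ∧ MemOf κ M (codeSet X A)}

/-!
`X` maps continuously to `wL`, so open covers of `wL` pull back to `X`. There property C gives, by
compactness, a finite open shrinking; the existence of one with the same disjointness pattern
reflects to `M`, whose open sets are the complements of members of `L`.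

The converse cannot reflect a sequence of open covers, as `M` need not be closed under sequences.
Instead, the failure of property C is expressed by a single set `𝒮` of collections of partial
unions that can be prolonged forever without reaching `X`. Such an `𝒮` exists in `M`, and choosing
inside `M` step by step gives a sequence of covers, each in `M`, to which property C of `wL`
applies; by compactness the resulting refinements reach `X` after finitely many steps.
-/

section Refinements

variable {X Y : Type*} [TopologicalSpace X] [TopologicalSpace Y]

/-- `V` is one of the families allowed in the definition of a C-space: a family of pairwise
disjoint open sets refining `U`. -/
def IsDisjointOpenRefinement {X : Type*} [TopologicalSpace X] (V U : Set (Set X)) : Prop :=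
  (∀ s ∈ V, IsOpen s) ∧ V.PairwiseDisjoint id ∧ Refines V U

theorem IsDisjointOpenRefinement.preimage {V U : Set (Set Y)} (hV : IsDisjointOpenRefinement V U)
    {f : X → Y} (hf : Continuous f) {U' : Set (Set X)} (hU : ∀ u ∈ U, ∃ u' ∈ U', f ⁻¹' u ⊆ u') :
    IsDisjointOpenRefinement ((f ⁻¹' ·) '' V) U' := by
  obtain ⟨hopen, hdisj, href⟩ := hV
  refine ⟨?_, ?_, ?_⟩
  · rintro _ ⟨v, hv, rfl⟩
    exact (hopen v hv).preimage hf
  · rintro _ ⟨v, hv, rfl⟩ _ ⟨w, hw, rfl⟩ hne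
    exact (hdisj hv hw (ne_of_apply_ne _ hne)).preimage f
  · rintro _ ⟨v, hv, rfl⟩
    obtain ⟨u, hu, hvu⟩ := href v hv
    obtain ⟨u', hu', huu'⟩ := hU u hu
    exact ⟨u', hu', (preimage_mono hvu).trans huu'⟩

theorem IsDisjointOpenRefinement.mono {V U U' : Set (Set X)}
    (hV : IsDisjointOpenRefinement V U) (hU : U ⊆ U') : IsDisjointOpenRefinement V U' :=
  ⟨hV.1, hV.2.1, fun v hv => (hV.2.2 v hv).imp fun _ hu => ⟨hU hu.1, hu.2⟩⟩

theorem isDisjointOpenRefinement_image {J : Type*} {V : J → Set X} {s : Set J} {U : Set (Set X)}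
    (hopen : ∀ j, IsOpen (V j)) (href : ∀ j ∈ s, ∃ u ∈ U, V j ⊆ u)
    (hdisj : s.PairwiseDisjoint V) : IsDisjointOpenRefinement (V '' s) U :=
  ⟨forall_mem_image.2 fun j _ => hopen j,
    fun _ ⟨i, hi, hiv⟩ _ ⟨j, hj, hjv⟩ hne => by
      subst hiv hjv
      exact hdisj hi hj (ne_of_apply_ne V hne),
    forall_mem_image.2 href⟩

theorem exists_fin_iUnion_eq_univ [CompactSpace X] {ι : Type*} {U : ι → Set X}
    (hopen : ∀ i, IsOpen (U i)) (hU : ⋃ i, U i = univ) :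
    ∃ (n : ℕ) (f : Fin n ↪ ι), ⋃ j, U (f j) = univ := by
  obtain ⟨t, ht⟩ := isCompact_univ.elim_finite_subcover U hopen hU.ge
  refine ⟨t.card, t.equivFin.symm.toEmbedding.trans (.subtype _), univ_subset_iff.1 ?_⟩
  have hcomp : ⋃ j, U (t.equivFin.symm j) = ⋃ i : t, U i :=
    t.equivFin.symm.surjective.iUnion_comp fun i : t => U i
  exact ht.trans_eq ((iUnion_subtype _ _).symm.trans hcomp.symm)

theorem IsCSpace.exists_finite_refinement [CompactSpace X] (hX : IsCSpace X)
    {U : ℕ → Set (Set X)} (hU : ∀ i, IsOpenCover (U i)) :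
    ∃ (n : ℕ) (k : Fin n → ℕ) (V : Fin n → Set X), (∀ j, IsOpen (V j)) ∧
      (∀ j, ∃ u ∈ U (k j), V j ⊆ u) ∧ (∀ i, (k ⁻¹' {i}).PairwiseDisjoint V) ∧
      ⋃ j, V j = univ := by
  obtain ⟨V, hV, hcover⟩ := hX U hU
  have hsigma : ⋃ p : Σ i, V i, (p.2 : Set X) = univ := by
    rw [iUnion_sigma, ← hcover]
    simp only [sUnion_eq_iUnion]
  have hdisj (p q : Σ i, V i) (hne : p ≠ q) (heq : p.1 = q.1) :
      Disjoint (p.2 : Set X) (q.2 : Set X) := by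
    obtain ⟨i, s⟩ := p
    obtain ⟨_, s'⟩ := q
    obtain rfl : i = _ := heq
    exact (hV i).2.1 s.2 s'.2 fun h => hne (congrArg (Sigma.mk i) (Subtype.ext h))
  obtain ⟨n, f, hf⟩ := exists_fin_iUnion_eq_univ (fun p => (hV p.1).1 _ p.2.2) hsigma
  exact ⟨n, fun j => (f j).1, fun j => (f j).2, fun j => (hV _).1 _ (f j).2.2,
    fun j => (hV _).2.2 _ (f j).2.2,
    fun i j hj j' hj' hne => hdisj _ _ (f.injective.ne hne) (hj.trans hj'.symm), hf⟩

end Refinements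

/-- A bounded lattice of subsets of `α` which is normal: disjoint members are separated by the
complements of two members. -/
structure IsNormalLattice {α : Type*} (F : Set (Set α)) : Prop where
  univ_mem : univ ∈ F
  empty_mem : ∅ ∈ F
  union_mem : ∀ a ∈ F, ∀ b ∈ F, a ∪ b ∈ F
  inter_mem : ∀ a ∈ F, ∀ b ∈ F, a ∩ b ∈ F
  normal : ∀ a ∈ F, ∀ b ∈ F, a ∩ b = ∅ →
    ∃ c ∈ F, ∃ d ∈ F, c ∪ d = univ ∧ a ∩ c = ∅ ∧ b ∩ d = ∅

namespace LUltra

variable {α : Type*} {F : Set (Set α)}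

theorem inter_nonempty (u : LUltra F) {a b : Set α} (ha : a ∈ u.sets) (hb : b ∈ u.sets) :
    (a ∩ b).Nonempty :=
  nonempty_iff_ne_empty.2 fun h => u.empty_notMem (h ▸ u.inter_mem a ha b hb)

theorem mem_or_mem_of_union_mem (u : LUltra F) {a b : Set α} (ha : a ∈ F) (hb : b ∈ F)
    (h : a ∪ b ∈ u.sets) : a ∈ u.sets ∨ b ∈ u.sets := by
  by_contra! hu
  obtain ⟨c, hc, hac⟩ := u.ultra a ha hu.1
  obtain ⟨d, hd, hbd⟩ := u.ultra b hb hu.2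
  obtain ⟨x, hx | hx, hxc, hxd⟩ := u.inter_nonempty h (u.inter_mem c hc d hd)
  · exact hac.le ⟨hx, hxc⟩
  · exact hbd.le ⟨hx, hxd⟩

/-- The basic open subset of the Wallman space determined by `O`, indexed by the open set `O`
rather than by its complement, which should belong to `F`. -/
def basicOpen (F : Set (Set α)) (O : Set α) : Set (LUltra F) :=
  {u | Oᶜ ∉ u.sets}

theorem isOpen_basicOpen {O : Set α} (hO : Oᶜ ∈ F) : IsOpen (basicOpen F O) :=
  isOpen_generateFrom_of_mem ⟨Oᶜ, hO, rfl⟩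

theorem mem_basicOpen_iff {O : Set α} (hO : Oᶜ ∈ F) {u : LUltra F} :
    u ∈ basicOpen F O ↔ ∃ b ∈ u.sets, b ⊆ O := by
  constructor
  · intro hu
    obtain ⟨b, hb, hOb⟩ := u.ultra _ hO hu
    exact ⟨b, hb, disjoint_compl_left_iff_subset.1 (disjoint_iff_inter_eq_empty.2 hOb)⟩
  · rintro ⟨b, hb, hbO⟩ hu
    obtain ⟨x, hxb, hxO⟩ := u.inter_nonempty hb hu
    exact hxO (hbO hxb)

theorem basicOpen_mono {O O' : Set α} (hO : Oᶜ ∈ F) (hO' : O'ᶜ ∈ F) (h : O ⊆ O') :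
    basicOpen F O ⊆ basicOpen F O' := fun u hu => by
  obtain ⟨b, hb, hbO⟩ := (mem_basicOpen_iff hO).1 hu
  exact (mem_basicOpen_iff hO').2 ⟨b, hb, hbO.trans h⟩

theorem disjoint_basicOpen {O O' : Set α} (hO : Oᶜ ∈ F) (hO' : O'ᶜ ∈ F) (h : Disjoint O O') :
    Disjoint (basicOpen F O) (basicOpen F O') := by
  refine Set.disjoint_left.2 fun u hu hu' => ?_
  obtain ⟨b, hb, hbO⟩ := (mem_basicOpen_iff hO).1 hu
  obtain ⟨c, hc, hcO⟩ := (mem_basicOpen_iff hO').1 hu'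
  obtain ⟨x, hxb, hxc⟩ := u.inter_nonempty hb hc
  exact Set.disjoint_left.1 h (hbO hxb) (hcO hxc)

theorem isTopologicalBasis_basicOpen (hF : IsNormalLattice F) :
    IsTopologicalBasis {s | ∃ O, Oᶜ ∈ F ∧ s = basicOpen F O} where
  exists_subset_inter := by
    rintro _ ⟨O, hO, rfl⟩ _ ⟨O', hO', rfl⟩ u ⟨hu, hu'⟩
    have hOO' : (O ∩ O')ᶜ ∈ F := by
      rw [compl_inter]
      exact hF.union_mem _ hO _ hO'
    refine ⟨_, ⟨O ∩ O', hOO', rfl⟩, fun h => ?_, subset_inter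
      (basicOpen_mono hOO' hO inter_subset_left) (basicOpen_mono hOO' hO' inter_subset_right)⟩
    rw [compl_inter] at h
    exact (u.mem_or_mem_of_union_mem hO hO' h).elim hu hu'
  sUnion_eq := by
    refine eq_univ_of_forall fun u => ⟨_, ⟨univ, ?_, rfl⟩, ?_⟩
    · rw [compl_univ]
      exact hF.empty_mem
    · rw [basicOpen, compl_univ]
      exact u.empty_notMem
  eq_generateFrom := by
    refine congrArg generateFrom (Set.ext fun s => ⟨?_, ?_⟩)
    · rintro ⟨a, ha, rfl⟩
      exact ⟨aᶜ, (compl_compl a).symm ▸ ha, by rw [basicOpen, compl_compl]; rfl⟩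
    · rintro ⟨O, hO, rfl⟩
      exact ⟨Oᶜ, hO, rfl⟩

/-- The point of the Wallman space determined by `x`. Since `{x}` need not be an intersection of
members of `F`, this is in general strictly larger than `{a ∈ F | x ∈ a}`. -/
def ofPoint (hF : IsNormalLattice F) (x : α) : LUltra F where
  sets := {a ∈ F | ∀ b ∈ F, x ∈ b → (a ∩ b).Nonempty}
  sets_subset := sep_subset _ _
  univ_mem := ⟨hF.univ_mem, fun b _ hxb => ⟨x, trivial, hxb⟩⟩
  empty_notMem h := (h.2 univ hF.univ_mem trivial).ne_empty (empty_inter _)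
  inter_mem a ha a' ha' := by
    refine ⟨hF.inter_mem a ha.1 a' ha'.1, fun b hb hxb => nonempty_iff_ne_empty.2 fun h => ?_⟩
    obtain ⟨c, hc, d, hd, hcd, hac, had⟩ :=
      hF.normal (a ∩ b) (hF.inter_mem a ha.1 b hb) a' ha'.1 (by rwa [inter_right_comm])
    rcases hcd.ge (mem_univ x) with hxc | hxd
    · refine (ha.2 (b ∩ c) (hF.inter_mem b hb c hc) ⟨hxb, hxc⟩).ne_empty ?_
      rw [← inter_assoc, hac]
    · exact (ha'.2 d hd hxd).ne_empty had
  superset_mem a ha b hb hab :=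
    ⟨hb, fun c hc hxc => (ha.2 c hc hxc).mono (inter_subset_inter_left c hab)⟩
  ultra a ha hna := by
    simp only [mem_sep_iff, ha, true_and, not_forall, not_nonempty_iff_eq_empty] at hna
    obtain ⟨b, hb, hxb, hab⟩ := hna
    exact ⟨b, ⟨hb, fun c _ hxc => ⟨x, hxb, hxc⟩⟩, hab⟩

theorem mem_sets_ofPoint (hF : IsNormalLattice F) {a : Set α} (ha : a ∈ F) {x : α} (hx : x ∈ a) :
    a ∈ (ofPoint hF x).sets :=
  ⟨ha, fun _ _ hxb => ⟨x, hx, hxb⟩⟩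

theorem notMem_sets_ofPoint_iff (hF : IsNormalLattice F) {a : Set α} (ha : a ∈ F) {x : α} :
    a ∉ (ofPoint hF x).sets ↔ ∃ b ∈ F, x ∈ b ∧ a ∩ b = ∅ := by
  simp only [ofPoint, mem_sep_iff, ha, true_and, not_forall, not_nonempty_iff_eq_empty,
    exists_prop]

theorem preimage_ofPoint_basicOpen_subset (hF : IsNormalLattice F) {O : Set α} (hO : Oᶜ ∈ F) :
    ofPoint hF ⁻¹' basicOpen F O ⊆ O :=
  fun _ hx => by_contra fun hxO => hx (mem_sets_ofPoint hF hO hxO)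

variable [TopologicalSpace α]

theorem continuous_ofPoint (hF : IsNormalLattice F) (hclosed : ∀ a ∈ F, IsClosed a) :
    Continuous (ofPoint hF) := by
  refine continuous_generateFrom_iff.2 ?_
  rintro _ ⟨a, ha, rfl⟩
  refine isOpen_iff_mem_nhds.2 fun x hx => ?_
  obtain ⟨b, hb, hxb, hab⟩ := (notMem_sets_ofPoint_iff hF ha).1 hx
  obtain ⟨c, hc, d, hd, hcd, hac, hbd⟩ := hF.normal a ha b hb hab
  have hxd : x ∈ dᶜ := fun hxd => hbd.le ⟨hxb, hxd⟩
  filter_upwards [(hclosed d hd).isOpen_compl.mem_nhds hxd] with y hyd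
  have hyc : y ∈ c := (hcd.ge (mem_univ y)).resolve_right hyd
  exact (notMem_sets_ofPoint_iff hF ha).2 ⟨c, hc, hyc, hac⟩

theorem exists_forall_mem [CompactSpace α] (hclosed : ∀ a ∈ F, IsClosed a) (u : LUltra F) :
    ∃ x, ∀ a ∈ u.sets, x ∈ a := by
  have hclosed' (a : Set α) (ha : a ∈ u.sets) : IsClosed a := hclosed a (u.sets_subset ha)
  have hdir : DirectedOn (· ⊇ ·) u.sets := fun a ha b hb =>
    ⟨a ∩ b, u.inter_mem a ha b hb, inter_subset_left, inter_subset_right⟩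
  exact IsCompact.nonempty_sInter_of_directed_nonempty_isCompact_isClosed
    (hS := ⟨univ, u.univ_mem⟩) hdir
    (fun a ha => nonempty_iff_ne_empty.2 fun h => u.empty_notMem (h ▸ ha))
    (fun a ha => (hclosed' a ha).isCompact) hclosed'

theorem exists_mem_basicOpen [CompactSpace α] (hclosed : ∀ a ∈ F, IsClosed a)
    {𝒪 : Set (Set α)} (h𝒪 : ⋃₀ 𝒪 = univ) (u : LUltra F) : ∃ O ∈ 𝒪, u ∈ basicOpen F O := by
  obtain ⟨x, hx⟩ := u.exists_forall_mem hclosed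
  obtain ⟨O, hO, hxO⟩ := h𝒪.ge (mem_univ x)
  exact ⟨O, hO, fun h => hx _ h hxO⟩

end LUltra

section WallmanSpace

variable {α : Type*} [TopologicalSpace α] {F : Set (Set α)}

/-- Finite open shrinkings of finite families of complements of members of `F` can be replaced by
shrinkings consisting of complements of members of `F`, keeping disjointness. -/
def ReflectsShrinkings (F : Set (Set α)) : Prop :=
  ∀ (n : ℕ) (O V : Fin n → Set α), (∀ j, (O j)ᶜ ∈ F) → (∀ j, IsOpen (V j)) → (∀ j, V j ⊆ O j) →
    ⋃ j, V j = univ → ∃ W : Fin n → Set α, (∀ j, (W j)ᶜ ∈ F) ∧ (∀ j, W j ⊆ O j) ∧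
      ⋃ j, W j = univ ∧ ∀ i j, Disjoint (V i) (V j) → Disjoint (W i) (W j)

variable [CompactSpace α]

theorem IsCSpace.exists_refinements_of_wallman (hF : IsNormalLattice F)
    (hclosed : ∀ a ∈ F, IsClosed a) (hC : IsCSpace (LUltra F)) {U : ℕ → Set (Set α)}
    (hUF : ∀ i, ∀ O ∈ U i, Oᶜ ∈ F) (hU : ∀ i, ⋃₀ U i = univ) :
    ∃ V : ℕ → Set (Set α), (∀ i, IsDisjointOpenRefinement (V i) (U i)) ∧
      ⋃ i, ⋃₀ V i = univ := by
  obtain ⟨V, hV, hcover⟩ := hC (fun i => LUltra.basicOpen F '' U i) fun i =>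
    ⟨forall_mem_image.2 fun O hO => LUltra.isOpen_basicOpen (hUF i O hO),
      eq_univ_of_forall fun u => sUnion_image _ _ ▸
        mem_iUnion₂.2 (by simpa only [exists_prop] using u.exists_mem_basicOpen hclosed (hU i))⟩
  refine ⟨fun i => (LUltra.ofPoint hF ⁻¹' ·) '' V i, fun i => .preimage (hV i)
    (LUltra.continuous_ofPoint hF hclosed) (forall_mem_image.2 fun O hO =>
      ⟨O, hO, LUltra.preimage_ofPoint_basicOpen_subset hF (hUF i O hO)⟩), ?_⟩
  simp only [sUnion_image, ← preimage_iUnion, ← sUnion_eq_biUnion, hcover, preimage_univ]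

theorem IsCSpace.wallman (hF : IsNormalLattice F) (hclosed : ∀ a ∈ F, IsClosed a)
    (hreflect : ReflectsShrinkings F) (hC : IsCSpace α) : IsCSpace (LUltra F) := by
  intro U hU
  let 𝒪 (i : ℕ) : Set (Set α) := {O | Oᶜ ∈ F ∧ ∃ u ∈ U i, LUltra.basicOpen F O ⊆ u}
  have h𝒪 (i : ℕ) : IsOpenCover (𝒪 i) := by
    refine ⟨fun O hO => isClosed_compl_iff.1 (hclosed _ hO.1), eq_univ_of_forall fun x => ?_⟩
    obtain ⟨u, hu, hxu⟩ := (hU i).2.ge (mem_univ (LUltra.ofPoint hF x))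
    obtain ⟨_, ⟨O, hO, rfl⟩, hxO, hOu⟩ :=
      (LUltra.isTopologicalBasis_basicOpen hF).exists_subset_of_mem_open hxu ((hU i).1 u hu)
    exact ⟨O, ⟨hO, u, hu, hOu⟩, LUltra.preimage_ofPoint_basicOpen_subset hF hO hxO⟩
  obtain ⟨n, k, V, hVopen, hVref, hVdisj, hVcover⟩ := hC.exists_finite_refinement h𝒪
  choose O hO hVO using hVref
  obtain ⟨W, hWF, hWO, hWcover, hWdisj⟩ :=
    hreflect n O V (fun j => (hO j).1) hVopen hVO hVcover
  refine ⟨fun i => (fun j => LUltra.basicOpen F (W j)) '' (k ⁻¹' {i}), fun i =>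
    isDisjointOpenRefinement_image (fun j => LUltra.isOpen_basicOpen (hWF j)) ?_ ?_, ?_⟩
  · rintro j rfl
    obtain ⟨hOF, u, hu, hOu⟩ := hO j
    exact ⟨u, hu, (LUltra.basicOpen_mono (hWF j) hOF (hWO j)).trans hOu⟩
  · exact fun i hi j hj hij =>
      LUltra.disjoint_basicOpen (hWF i) (hWF j) (hWdisj i j (hVdisj _ hi hj hij))
  · refine eq_univ_of_forall fun u => ?_
    obtain ⟨_, ⟨j, rfl⟩, hu⟩ :=
      u.exists_mem_basicOpen hclosed (𝒪 := range W) ((sUnion_range W).trans hWcover)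
    exact mem_iUnion.2 ⟨k j, _, ⟨j, rfl, rfl⟩, hu⟩

end WallmanSpace

section Definability

open FirstOrder.Language

variable {L : FirstOrder.Language} {N : Type*} [L.Structure N]

theorem exists_forall_mem_of_definable (M : L.ElementarySubstructure N) {β : Type} [Finite β]
    {D : Set (β → N)} (hD : (M : Set N).Definable L D) (hne : D.Nonempty) :
    ∃ v ∈ D, ∀ i, v i ∈ M := by
  obtain ⟨φ, rfl⟩ := Set.definable_iff_exists_formula_sum.1 hD
  obtain ⟨v, hv⟩ := hne
  have hN : (φ.iExs β).Realize (M.subtype ∘ (id : M → M)) :=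
    Formula.realize_iExs.2 ⟨v, hv⟩
  rw [M.subtype.map_formula, Formula.realize_iExs] at hN
  obtain ⟨w, hw⟩ := hN
  refine ⟨fun i => w i, ?_, fun i => (w i).2⟩
  rw [← M.subtype.map_formula] at hw
  rw [mem_ofPred_eq]
  convert hw using 1
  ext (m | i) <;> rfl

/-- An interpretation of the type `T` in the structure `N` with parameters from `M`: the elements
of `T` are represented by finite tuples of elements of `N`, forming a definable set. -/
class Interpretation (M : L.ElementarySubstructure N) (T : Type*) where
  Index : Type
  finite_index : Finite Index
  tuple : T → Index → N
  tuple_injective : Function.Injective tuple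
  definable_range_tuple : (M : Set N).Definable L (range tuple)

attribute [instance] Interpretation.finite_index

open Interpretation

section Maps

variable (M : L.ElementarySubstructure N) {Γ S T : Type*}

instance : Interpretation M N where
  Index := Unit
  finite_index := inferInstance
  tuple x _ := x
  tuple_injective _ _ h := congrFun h ()
  definable_range_tuple := by
    convert Set.definable_univ (A := (M : Set N)) (L := L) (α := Unit)
    exact range_eq_univ.2 fun v => ⟨v (), rfl⟩

instance [Interpretation M S] [Interpretation M T] : Interpretation M (S × T) where
  Index := Index M S ⊕ Index M T
  finite_index := inferInstance
  tuple p := Sum.elim (tuple p.1) (tuple p.2)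
  tuple_injective p q h := Prod.ext
    (tuple_injective (M := M) (funext fun i => congrFun h (Sum.inl i)))
    (tuple_injective (M := M) (funext fun i => congrFun h (Sum.inr i)))
  definable_range_tuple := by
    convert ((definable_range_tuple (M := M) (T := S)).preimage_comp Sum.inl).inter
      ((definable_range_tuple (M := M) (T := T)).preimage_comp Sum.inr) using 1
    ext v
    constructor
    · rintro ⟨p, rfl⟩
      exact ⟨⟨p.1, rfl⟩, ⟨p.2, rfl⟩⟩
    · rintro ⟨⟨s, hs⟩, ⟨t, ht⟩⟩
      exact ⟨(s, t), (congrArg₂ Sum.elim hs ht).trans (Sum.elim_comp_inl_inr v)⟩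

instance (J : Type) [Finite J] [Interpretation M T] : Interpretation M (J → T) where
  Index := J × Index M T
  finite_index := inferInstance
  tuple f q := tuple (f q.1) q.2
  tuple_injective f g h :=
    funext fun j => tuple_injective (M := M) (funext fun i => congrFun h (j, i))
  definable_range_tuple := by
    convert Set.definable_iInter_of_finite fun j : J =>
      (definable_range_tuple (M := M) (T := T)).preimage_comp fun i => (j, i) using 1
    ext v
    simp only [mem_iInter, mem_preimage]
    constructor
    · rintro ⟨f, rfl⟩ j
      exact ⟨f j, rfl⟩
    · intro h
      choose f hf using h
      exact ⟨f, funext fun q => congrFun (hf q.1) q.2⟩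

variable [Interpretation M Γ] [Interpretation M S] [Interpretation M T]

/-- The element `t` is represented by a tuple of elements of `M`. For an interpretation by codes
in `H(κ)`, this is what one writes as `t ∈ M`. -/
def IsCodedIn (t : T) : Prop :=
  ∀ i, tuple (M := M) t i ∈ M

/-- A map between interpreted types that is induced by a definable map of tuples. -/
def IsDefinableMap (f : Γ → T) : Prop :=
  ∃ F : (Index M Γ → N) → Index M T → N, (M : Set N).DefinableMap L F ∧
    ∀ γ, tuple (f γ) = F (tuple γ)

variable {M}

theorem isDefinableMap_id : IsDefinableMap M fun γ : Γ => γ :=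
  ⟨id, fun _ => Set.DefinableFun.proj L, fun _ => rfl⟩

theorem isDefinableMap_const {t : T} (ht : IsCodedIn M t) : IsDefinableMap M fun _ : Γ => t :=
  ⟨fun _ => tuple t, fun i => L.definableFun_const _ (ht i), fun _ => rfl⟩

theorem IsDefinableMap.comp {g : S → T} (hg : IsDefinableMap M g) {f : Γ → S}
    (hf : IsDefinableMap M f) : IsDefinableMap M fun γ => g (f γ) := by
  obtain ⟨F, hF, hf⟩ := hf
  obtain ⟨G, hG, hg⟩ := hg
  exact ⟨fun v => G (F v), fun i => (hG i).comp hF, fun γ => by rw [hg, hf]⟩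

theorem IsDefinableMap.fst {f : Γ → S × T} (hf : IsDefinableMap M f) :
    IsDefinableMap M fun γ => (f γ).1 := by
  obtain ⟨F, hF, hf⟩ := hf
  exact ⟨fun v i => F v (Sum.inl i), fun i => hF (Sum.inl i),
    fun γ => funext fun i => congrFun (hf γ) (Sum.inl i)⟩

theorem IsDefinableMap.snd {f : Γ → S × T} (hf : IsDefinableMap M f) :
    IsDefinableMap M fun γ => (f γ).2 := by
  obtain ⟨F, hF, hf⟩ := hf
  exact ⟨fun v i => F v (Sum.inr i), fun i => hF (Sum.inr i),
    fun γ => funext fun i => congrFun (hf γ) (Sum.inr i)⟩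

theorem IsDefinableMap.prodMk {f : Γ → S} {g : Γ → T} (hf : IsDefinableMap M f)
    (hg : IsDefinableMap M g) : IsDefinableMap M fun γ => (f γ, g γ) := by
  obtain ⟨F, hF, hf⟩ := hf
  obtain ⟨G, hG, hg⟩ := hg
  refine ⟨fun v => Sum.elim (F v) (G v), ?_, fun γ => congrArg₂ Sum.elim (hf γ) (hg γ)⟩
  rintro (i | i)
  exacts [hF i, hG i]

theorem IsDefinableMap.apply {J : Type} [Finite J] {f : Γ → J → T} (hf : IsDefinableMap M f)
    (j : J) : IsDefinableMap M fun γ => f γ j := by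
  obtain ⟨F, hF, hf⟩ := hf
  exact ⟨fun v i => F v (j, i), fun i => hF (j, i), fun γ => funext fun i => congrFun (hf γ) (j, i)⟩

theorem isCodedIn_prod {p : S × T} : IsCodedIn M p ↔ IsCodedIn M p.1 ∧ IsCodedIn M p.2 :=
  Sum.forall

theorem isCodedIn_pi {J : Type} [Finite J] {f : J → T} :
    IsCodedIn M f ↔ ∀ j, IsCodedIn M (f j) :=
  Prod.forall

end Maps

section Predicates

variable {M : L.ElementarySubstructure N} {Γ T : Type*} [Interpretation M Γ] [Interpretation M T]

variable (M) in
/-- A predicate on an interpreted type is definable if the tuples representing the elements that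
satisfy it form a set definable with parameters from `M`. -/
def DefinablePred (P : T → Prop) : Prop :=
  (M : Set N).Definable L (tuple (M := M) '' {t | P t})

variable {P Q : Γ → Prop}

theorem definablePred_of_definable {D : Set (Index M Γ → N)} (hD : (M : Set N).Definable L D)
    (h : ∀ γ, P γ ↔ tuple γ ∈ D) : DefinablePred M P := by
  have : tuple (M := M) '' {γ | P γ} = range tuple ∩ D := by
    simp only [h, ← image_univ, ← image_inter_preimage, univ_inter, preimage]
  rw [DefinablePred, this]
  exact definable_range_tuple.inter hD

namespace DefinablePred

theorem exists_isCodedIn {P : T → Prop} (hP : DefinablePred M P) (h : ∃ t, P t) :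
    ∃ t, IsCodedIn M t ∧ P t := by
  obtain ⟨_, ⟨t, ht, rfl⟩, htM⟩ := exists_forall_mem_of_definable M hP (Set.Nonempty.image _ h)
  exact ⟨t, htM, ht⟩

theorem comp {R : T → Prop} (hR : DefinablePred M R) {f : Γ → T} (hf : IsDefinableMap M f) :
    DefinablePred M fun γ => R (f γ) := by
  obtain ⟨F, hF, hf⟩ := hf
  refine definablePred_of_definable (hR.preimage_map hF) fun γ => ?_
  rw [mem_preimage, ← hf, tuple_injective.mem_set_image, mem_ofPred_eq]

theorem eq {f g : Γ → T} (hf : IsDefinableMap M f) (hg : IsDefinableMap M g) :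
    DefinablePred M fun γ => f γ = g γ := by
  obtain ⟨F, hF, hf⟩ := hf
  obtain ⟨G, hG, hg⟩ := hg
  refine definablePred_of_definable
    (Set.definable_iInter_of_finite fun i => (hF i).ofPred_eq (hG i)) fun γ => ?_
  rw [← (tuple_injective (M := M)).eq_iff (a := f γ), hf, hg, funext_iff, mem_iInter]
  rfl

theorem const (p : Prop) : DefinablePred M fun _ : Γ => p := by
  by_cases hp : p
  · exact definablePred_of_definable Set.definable_univ fun _ => iff_of_true hp trivial
  · exact definablePred_of_definable Set.definable_empty fun _ => iff_of_false hp id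

theorem not (hP : DefinablePred M P) : DefinablePred M fun γ => ¬P γ :=
  definablePred_of_definable hP.compl fun γ => by
    rw [mem_compl_iff, tuple_injective.mem_set_image, mem_ofPred_eq]

theorem and (hP : DefinablePred M P) (hQ : DefinablePred M Q) :
    DefinablePred M fun γ => P γ ∧ Q γ :=
  definablePred_of_definable (hP.inter hQ) fun γ => by
    simp only [mem_inter_iff, tuple_injective.mem_set_image, mem_ofPred_eq]

theorem or (hP : DefinablePred M P) (hQ : DefinablePred M Q) :
    DefinablePred M fun γ => P γ ∨ Q γ :=
  definablePred_of_definable (hP.union hQ) fun γ => by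
    simp only [mem_union, tuple_injective.mem_set_image, mem_ofPred_eq]

theorem imp (hP : DefinablePred M P) (hQ : DefinablePred M Q) :
    DefinablePred M fun γ => P γ → Q γ := by
  simpa only [imp_iff_not_or] using hP.not.or hQ

theorem iff (hP : DefinablePred M P) (hQ : DefinablePred M Q) :
    DefinablePred M fun γ => (P γ ↔ Q γ) := by
  simpa only [iff_iff_implies_and_implies] using (hP.imp hQ).and (hQ.imp hP)

theorem exists' {R : Γ → T → Prop} (hR : DefinablePred M fun p : Γ × T => R p.1 p.2) :
    DefinablePred M fun γ => ∃ t, R γ t := by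
  have : tuple (M := M) '' {γ | ∃ t, R γ t} =
      (fun v : Index M Γ ⊕ Index M T → N => v ∘ Sum.inl) ''
        (tuple (M := M) '' {p : Γ × T | R p.1 p.2}) := by
    rw [image_image]
    ext v
    constructor
    · rintro ⟨γ, ⟨t, h⟩, rfl⟩
      exact ⟨(γ, t), h, rfl⟩
    · rintro ⟨⟨γ, t⟩, h, rfl⟩
      exact ⟨γ, ⟨t, h⟩, rfl⟩
  rw [DefinablePred, this]
  exact Set.Definable.image_comp hR Sum.inl

theorem forall' {R : Γ → T → Prop} (hR : DefinablePred M fun p : Γ × T => R p.1 p.2) :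
    DefinablePred M fun γ => ∀ t, R γ t := by
  simpa only [not_exists, not_not] using (exists' (R := fun γ t => ¬R γ t) hR.not).not

theorem exists_finite {J : Type*} [Finite J] {R : J → Γ → Prop}
    (hR : ∀ j, DefinablePred M (R j)) : DefinablePred M fun γ => ∃ j, R j γ :=
  definablePred_of_definable (Set.definable_iUnion_of_finite hR) fun γ => by
    simp only [mem_iUnion, tuple_injective.mem_set_image, mem_ofPred_eq]

theorem forall_finite {J : Type*} [Finite J] {R : J → Γ → Prop}
    (hR : ∀ j, DefinablePred M (R j)) : DefinablePred M fun γ => ∀ j, R j γ :=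
  definablePred_of_definable (Set.definable_iInter_of_finite hR) fun γ => by
    simp only [mem_iInter, tuple_injective.mem_set_image, mem_ofPred_eq]

end DefinablePred

end Predicates

end Definability

section Coding

open FirstOrder.Language

variable {κ : Cardinal.{1}}

theorem heredLt_iff {x : ZFSet.{0}} :
    HeredLt κ x ↔ Cardinal.mk x.toSet < κ ∧ ∀ y ∈ x, HeredLt κ y := by
  unfold HeredLt
  rw [WellFounded.fix_eq]

theorem HeredLt.of_mem {x y : ZFSet.{0}} (hx : HeredLt κ x) (hy : y ∈ x) : HeredLt κ y :=
  (heredLt_iff.1 hx).2 y hy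

theorem HeredLt.of_subset {x y : ZFSet.{0}} (hx : HeredLt κ x) (hy : y ⊆ x) : HeredLt κ y :=
  heredLt_iff.2 ⟨(Cardinal.mk_le_mk_of_subset fun _ hz => hy hz).trans_lt (heredLt_iff.1 hx).1,
    fun _ hz => hx.of_mem (hy hz)⟩

namespace HKappa

instance : Membership (HKappa κ) (HKappa κ) := ⟨fun y x => (x : ZFSet.{0}) ∈ (y : ZFSet.{0})⟩

theorem ext {x y : HKappa κ} (h : ∀ z, z ∈ x ↔ z ∈ y) : x = y :=
  Subtype.ext <| ZFSet.ext fun z =>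
    ⟨fun hz => (h ⟨z, x.2.of_mem hz⟩).1 hz, fun hz => (h ⟨z, y.2.of_mem hz⟩).2 hz⟩

theorem exists_separation (y : HKappa κ) (P : HKappa κ → Prop) :
    ∃ x : HKappa κ, ∀ z, z ∈ x ↔ z ∈ y ∧ P z := by
  let s := ZFSet.sep (fun z => ∃ h : z ∈ HKappa κ, P ⟨z, h⟩) (y : ZFSet.{0})
  have hs : HeredLt κ s := y.2.of_subset fun _ hz => (ZFSet.mem_sep.1 hz).1
  refine ⟨⟨s, hs⟩, fun z => ?_⟩
  change (z : ZFSet.{0}) ∈ s ↔ (z : ZFSet.{0}) ∈ (y : ZFSet.{0}) ∧ P z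
  rw [ZFSet.mem_sep]
  exact and_congr_right fun _ => ⟨fun ⟨_, h⟩ => h, fun h => ⟨z.2, h⟩⟩

end HKappa

variable {M : Language.graph.ElementarySubstructure (HKappa κ)}

theorem DefinablePred.hKappa_mem {Γ : Type*} [Interpretation M Γ] {f g : Γ → HKappa κ}
    (hf : IsDefinableMap M f) (hg : IsDefinableMap M g) :
    DefinablePred M fun γ => f γ ∈ g γ := by
  have hadj : (M : Set (HKappa κ)).Definable Language.graph
      {v : Unit ⊕ Unit → HKappa κ | v (Sum.inl ()) ∈ v (Sum.inr ())} :=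
    Set.definable_iff_exists_formula_sum.2 ⟨Language.adj.formula₂
      (Term.var (Sum.inr (Sum.inl ()))) (Term.var (Sum.inr (Sum.inr ()))), by
        ext v
        rw [mem_ofPred_eq, mem_ofPred_eq, Formula.realize_rel₂]
        rfl⟩
  have hmem : DefinablePred M fun p : HKappa κ × HKappa κ => p.1 ∈ p.2 :=
    definablePred_of_definable hadj fun p => Iff.rfl
  exact hmem.comp (hf.prodMk hg)

/-- A coding of the elements of `T` by elements of `H(κ)` that form a class definable with
parameters from `M`. -/
class Coding (M : Language.graph.ElementarySubstructure (HKappa κ)) (T : Type*) where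
  code : T → HKappa κ
  code_injective : Function.Injective code
  definablePred_mem_range_code : DefinablePred M fun x : HKappa κ => x ∈ range code

/-- A coding is small if its codes all belong to a single element of `H(κ)`, so that subsets of `T`
are coded as well. -/
class SmallCoding (M : Language.graph.ElementarySubstructure (HKappa κ)) (T : Type*)
    [Coding M T] : Prop where
  exists_code_mem : ∃ y : HKappa κ, ∀ t : T, Coding.code M t ∈ y

namespace Coding

variable {T : Type*} [Coding M T]

instance : Interpretation M T where
  Index := Unit
  finite_index := inferInstance
  tuple t _ := code M t
  tuple_injective _ _ h := code_injective (congrFun h ())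
  definable_range_tuple := by
    have hrange : range (fun (t : T) (_ : Unit) => code M t) =
        Interpretation.tuple (M := M) '' range (code M : T → HKappa κ) :=
      range_comp (Interpretation.tuple (M := M)) (code M)
    rw [hrange]
    exact definablePred_mem_range_code

theorem isDefinableMap_code : IsDefinableMap M (code M : T → HKappa κ) :=
  ⟨id, fun _ => Set.DefinableFun.proj _, fun _ => rfl⟩

theorem isCodedIn_iff {t : T} : IsCodedIn M t ↔ code M t ∈ M :=
  ⟨fun h => h (), fun h _ => h⟩

variable [SmallCoding M T]

variable (M) in
theorem exists_mem_iff_mem_image (A : Set T) : ∃ x : HKappa κ, ∀ z, z ∈ x ↔ z ∈ code M '' A := by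
  obtain ⟨y, hy⟩ := SmallCoding.exists_code_mem (M := M) (T := T)
  obtain ⟨x, hx⟩ := HKappa.exists_separation y (· ∈ code M '' A)
  refine ⟨x, fun z => (hx z).trans (and_iff_right_of_imp ?_)⟩
  rintro ⟨t, -, rfl⟩
  exact hy t

variable (M) in
/-- The set of codes of the elements of `A`, as an element of `H(κ)`. -/
noncomputable def image (A : Set T) : HKappa κ :=
  (exists_mem_iff_mem_image M A).choose

theorem mem_image {A : Set T} {z : HKappa κ} : z ∈ image M A ↔ z ∈ code M '' A :=
  (exists_mem_iff_mem_image M A).choose_spec z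

theorem mem_range_image {x : HKappa κ} :
    x ∈ range (image M : Set T → HKappa κ) ↔ ∀ z ∈ x, z ∈ range (code M : T → HKappa κ) := by
  constructor
  · rintro ⟨A, rfl⟩ z hz
    exact image_subset_range _ _ (mem_image.1 hz)
  · refine fun h => ⟨{t | code M t ∈ x}, HKappa.ext fun z => mem_image.trans ⟨?_, fun hz => ?_⟩⟩
    · rintro ⟨t, ht, rfl⟩
      exact ht
    · obtain ⟨t, rfl⟩ := h z hz
      exact ⟨t, hz, rfl⟩

noncomputable instance : Coding M (Set T) where
  code := image M
  code_injective A B h := code_injective.image_injective <| Set.ext fun z => by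
    rw [← mem_image (M := M), h, mem_image]
  definablePred_mem_range_code := by
    simp only [mem_range_image]
    exact .forall' (.imp (.hKappa_mem isDefinableMap_id.snd isDefinableMap_id.fst)
      (definablePred_mem_range_code.comp isDefinableMap_id.snd))

theorem code_mem_code {t : T} {A : Set T} : code M t ∈ code M A ↔ t ∈ A :=
  mem_image.trans code_injective.mem_set_image

end Coding

section

variable {Γ T : Type*} [Interpretation M Γ] [Coding M T] [SmallCoding M T]

theorem DefinablePred.mem {f : Γ → T} {g : Γ → Set T} (hf : IsDefinableMap M f)
    (hg : IsDefinableMap M g) : DefinablePred M fun γ => f γ ∈ g γ := by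
  simpa only [Coding.code_mem_code] using
    DefinablePred.hKappa_mem (Coding.isDefinableMap_code.comp hf)
      (Coding.isDefinableMap_code.comp hg)

theorem DefinablePred.comp_set {R : Γ → Set T → Prop}
    (hR : DefinablePred M fun p : Γ × Set T => R p.1 p.2) {g : Γ → Set T}
    (hg : DefinablePred M fun p : Γ × T => p.2 ∈ g p.1) : DefinablePred M fun γ => R γ (g γ) := by
  have h : DefinablePred M fun γ => ∃ A, (∀ t, t ∈ A ↔ t ∈ g γ) ∧ R γ A :=
    .exists' (.and (.forall' (.iff (.mem isDefinableMap_id.snd isDefinableMap_id.fst.snd)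
      (hg.comp (isDefinableMap_id.fst.fst.prodMk isDefinableMap_id.snd)))) hR)
  simpa only [← Set.ext_iff, exists_eq_left] using h

theorem DefinablePred.isCodedIn_setOf {P : T → Prop} (hP : DefinablePred M P) :
    IsCodedIn M {t | P t} := by
  have hdef : DefinablePred M fun A : Set T => ∀ t, t ∈ A ↔ P t :=
    .forall' (.iff (.mem isDefinableMap_id.snd isDefinableMap_id.fst)
      (hP.comp isDefinableMap_id.snd))
  obtain ⟨A, hA, h⟩ := hdef.exists_isCodedIn ⟨{t | P t}, fun _ => Iff.rfl⟩
  rwa [show {t | P t} = A from Set.ext fun t => (h t).symm]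

theorem IsCodedIn.compl {A : Set T} (hA : IsCodedIn M A) : IsCodedIn M Aᶜ :=
  (DefinablePred.not (.mem isDefinableMap_id (isDefinableMap_const hA))).isCodedIn_setOf

theorem definablePred_union_sUnion_mem [SmallCoding M (Set T)] :
    DefinablePred M fun p : (Set T × Set (Set T)) × Set (Set T) => p.1.1 ∪ ⋃₀ p.1.2 ∈ p.2 :=
  DefinablePred.comp_set (Γ := (Set T × Set (Set T)) × Set (Set T)) (R := fun p O => O ∈ p.2)
    (.mem isDefinableMap_id.snd isDefinableMap_id.fst.snd) <|
  .or (.mem isDefinableMap_id.snd isDefinableMap_id.fst.fst.fst) <|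
    .exists' <| .and (.mem isDefinableMap_id.snd isDefinableMap_id.fst.fst.fst.snd)
      (.mem isDefinableMap_id.fst.snd isDefinableMap_id.snd)

end

end Coding

section ElementaryTrace

variable {κ : Cardinal.{1}} {M : Language.graph.ElementarySubstructure (HKappa κ)}
  {α : Type*} [TopologicalSpace α] [Coding M α] [SmallCoding M α]

variable (M α) in
/-- The lattice `2^α ∩ M`, consisting of the closed sets that belong to `M`. -/
def closedTrace : Set (Set α) :=
  {A | IsClosed A ∧ IsCodedIn M A}

theorem compl_mem_closedTrace_iff {O : Set α} :
    Oᶜ ∈ closedTrace M α ↔ IsOpen O ∧ IsCodedIn M O :=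
  and_congr isClosed_compl_iff ⟨fun h => compl_compl O ▸ h.compl, IsCodedIn.compl⟩

variable (hopen : DefinablePred M (IsOpen : Set α → Prop))

include hopen in
theorem definablePred_isClosed : DefinablePred M (IsClosed : Set α → Prop) := by
  have h : DefinablePred M fun A : Set α => IsOpen Aᶜ :=
    (hopen.comp isDefinableMap_id.snd).comp_set
      (.not (.mem isDefinableMap_id.snd isDefinableMap_id.fst))
  simpa only [isOpen_compl_iff] using h

include hopen in
theorem exists_closedTrace_separation [NormalSpace α] {a b : Set α} (ha : a ∈ closedTrace M α)
    (hb : b ∈ closedTrace M α) (hab : a ∩ b = ∅) :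
    ∃ c ∈ closedTrace M α, ∃ d ∈ closedTrace M α, c ∪ d = univ ∧ a ∩ c = ∅ ∧ b ∩ d = ∅ := by
  have hdef : DefinablePred M fun p : Set α × Set α => (IsClosed p.1 ∧ IsClosed p.2) ∧
      (∀ x, x ∈ p.1 ∨ x ∈ p.2) ∧ (∀ x, x ∈ a → x ∉ p.1) ∧ ∀ x, x ∈ b → x ∉ p.2 :=
    have hclosed := definablePred_isClosed hopen
    have hfst := isDefinableMap_id.fst (Γ := (Set α × Set α) × α)
    .and (.and (hclosed.comp isDefinableMap_id.fst) (hclosed.comp isDefinableMap_id.snd)) <|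
      .and (.forall' (.or (.mem isDefinableMap_id.snd hfst.fst)
        (.mem isDefinableMap_id.snd hfst.snd))) <|
      .and (.forall' (.imp (.mem isDefinableMap_id.snd (isDefinableMap_const ha.2))
        (.not (.mem isDefinableMap_id.snd hfst.fst))))
        (.forall' (.imp (.mem isDefinableMap_id.snd (isDefinableMap_const hb.2))
        (.not (.mem isDefinableMap_id.snd hfst.snd))))
  obtain ⟨U, V, hU, hV, haU, hbV, hUV⟩ :=
    normal_separation ha.1 hb.1 (disjoint_iff_inter_eq_empty.2 hab)
  obtain ⟨⟨c, d⟩, hcd, ⟨hc, hd⟩, hcover, hac, hbd⟩ := hdef.exists_isCodedIn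
    ⟨(Uᶜ, Vᶜ), ⟨hU.isClosed_compl, hV.isClosed_compl⟩,
      fun x => not_and_or.1 fun h => Set.disjoint_left.1 hUV h.1 h.2,
      fun x hx hxU => hxU (haU hx), fun x hx hxV => hxV (hbV hx)⟩
  obtain ⟨hcM, hdM⟩ := isCodedIn_prod.1 hcd
  exact ⟨c, ⟨hc, hcM⟩, d, ⟨hd, hdM⟩, eq_univ_of_forall hcover,
    disjoint_iff_inter_eq_empty.1 (Set.disjoint_left.2 hac),
    disjoint_iff_inter_eq_empty.1 (Set.disjoint_left.2 hbd)⟩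

include hopen in
theorem isNormalLattice_closedTrace [NormalSpace α] : IsNormalLattice (closedTrace M α) where
  univ_mem := ⟨isClosed_univ, (DefinablePred.const True).isCodedIn_setOf⟩
  empty_mem := ⟨isClosed_empty, (DefinablePred.const False).isCodedIn_setOf⟩
  union_mem _ ha _ hb := ⟨ha.1.union hb.1,
    (DefinablePred.or (.mem isDefinableMap_id (isDefinableMap_const ha.2))
      (.mem isDefinableMap_id (isDefinableMap_const hb.2))).isCodedIn_setOf⟩
  inter_mem _ ha _ hb := ⟨ha.1.inter hb.1,
    (DefinablePred.and (.mem isDefinableMap_id (isDefinableMap_const ha.2))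
      (.mem isDefinableMap_id (isDefinableMap_const hb.2))).isCodedIn_setOf⟩
  normal _ ha _ hb := exists_closedTrace_separation hopen ha hb

include hopen in
theorem reflectsShrinkings_closedTrace : ReflectsShrinkings (closedTrace M α) := by
  intro n O V hO hV hVO hcover
  have hOM (j : Fin n) : IsCodedIn M (O j) := (compl_mem_closedTrace_iff.1 (hO j)).2
  have hdef : DefinablePred M fun W : Fin n → Set α => (∀ j, IsOpen (W j)) ∧
      (∀ j x, x ∈ W j → x ∈ O j) ∧ (∀ x, ∃ j, x ∈ W j) ∧
      ∀ i j, Disjoint (V i) (V j) → ∀ x, x ∈ W i → x ∉ W j :=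
    have hmem (j : Fin n) : DefinablePred M fun p : (Fin n → Set α) × α => p.2 ∈ p.1 j :=
      .mem isDefinableMap_id.snd (isDefinableMap_id.fst.apply j)
    .and (.forall_finite fun j => hopen.comp (isDefinableMap_id.apply j)) <|
      .and (.forall_finite fun j => .forall' (.imp (hmem j)
        (.mem isDefinableMap_id.snd (isDefinableMap_const (hOM j))))) <|
      .and (.forall' (.exists_finite hmem)) <|
      .forall_finite fun i => .forall_finite fun j => .imp (.const _)
        (.forall' (.imp (hmem i) (.not (hmem j))))
  obtain ⟨W, hWM, hWopen, hWO, hWcover, hWdisj⟩ := hdef.exists_isCodedIn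
    ⟨V, hV, hVO, iUnion_eq_univ_iff.1 hcover, fun i j h _ hi => Set.disjoint_left.1 h hi⟩
  exact ⟨W, fun j => compl_mem_closedTrace_iff.2 ⟨hWopen j, isCodedIn_pi.1 hWM j⟩, hWO,
    iUnion_eq_univ_iff.2 hWcover, fun i j h => Set.disjoint_left.2 (hWdisj i j h)⟩

end ElementaryTrace

section Obstruction

variable {α : Type*} [TopologicalSpace α]

/-- Adding the union of a disjoint open refinement of `U` to a member of `K₁` yields a member of
`K₂`. -/
def ExtendsAlong (U K₁ K₂ : Set (Set α)) : Prop :=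
  ∀ V, IsDisjointOpenRefinement V U → ∀ O ∈ K₁, O ∪ ⋃₀ V ∈ K₂

/-- A witness that `α` is not a C-space, which quantifies over sets of subsets of `α` but not over
infinite sequences: a family of collections `K` of partial unions, where each `K ∈ 𝒮` comes with an
open cover along which it extends to some `K' ∈ 𝒮`, without ever reaching `univ`. -/
def IsObstruction (𝒮 : Set (Set (Set α))) : Prop :=
  (∃ K, K ∈ 𝒮 ∧ ∅ ∈ K) ∧ (∀ K, K ∈ 𝒮 → univ ∉ K) ∧
    ∀ K, K ∈ 𝒮 → ∃ p : Set (Set α) × Set (Set α),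
      IsOpenCover p.1 ∧ p.2 ∈ 𝒮 ∧ ExtendsAlong p.1 K p.2

theorem exists_isObstruction (hC : ¬IsCSpace α) : ∃ 𝒮 : Set (Set (Set α)), IsObstruction 𝒮 := by
  let incompletable (U : ℕ → Set (Set α)) : Set (Set α) :=
    {O | ∀ V : ℕ → Set (Set α), (∀ i, IsDisjointOpenRefinement (V i) (U i)) →
      O ∪ ⋃ i, ⋃₀ V i ≠ univ}
  refine ⟨incompletable '' {U | ∀ i, IsOpenCover (U i)}, ?_, ?_, ?_⟩
  · simp only [IsCSpace, not_forall, not_exists, not_and] at hC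
    obtain ⟨U, hU, hV⟩ := hC
    exact ⟨_, mem_image_of_mem _ hU, fun V h => (empty_union _).trans_ne (hV V h)⟩
  · rintro _ ⟨U, -, rfl⟩ h
    exact h (fun _ => ∅) (fun i => ⟨by simp, by simp, by simp [Refines]⟩) (univ_union _)
  · rintro _ ⟨U, hU, rfl⟩
    refine ⟨(U 0, incompletable fun i => U (i + 1)), hU 0, ⟨_, fun i => hU (i + 1), rfl⟩,
      fun V hV O hO W hW => ?_⟩
    let V' (i : ℕ) : Set (Set α) := Nat.casesOn i V W
    have hV' (i : ℕ) : IsDisjointOpenRefinement (V' i) (U i) := Nat.casesOn i hV hW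
    have h := hO V' hV'
    rwa [← union_iUnion_nat_succ, ← union_assoc] at h

theorem iUnion_sUnion_ne_univ [CompactSpace α] {U K V : ℕ → Set (Set α)} (hempty : ∅ ∈ K 0)
    (huniv : ∀ n, univ ∉ K n) (hK : ∀ n, ExtendsAlong (U n) (K n) (K (n + 1)))
    (hV : ∀ n, IsDisjointOpenRefinement (V n) (U n)) : ⋃ n, ⋃₀ V n ≠ univ := by
  intro hcover
  have hmem (n : ℕ) : ⋃ i < n, ⋃₀ V i ∈ K n := by
    induction n with
    | zero => simpa using hempty
    | succ n ih =>
      rw [biUnion_lt_succ]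
      exact hK n (V n) (hV n) _ ih
  obtain ⟨n, hn⟩ := isCompact_univ.elim_directed_cover (fun n => ⋃ i < n, ⋃₀ V i)
    (fun n => isOpen_biUnion fun i _ => isOpen_sUnion (hV i).1)
    (fun x hx => by
      obtain ⟨i, hi⟩ := mem_iUnion.1 (hcover.ge hx)
      exact mem_iUnion.2 ⟨i + 1, mem_biUnion (Nat.lt_succ_self i) hi⟩)
    (directed_of_isDirected_le fun m n hmn =>
      biUnion_subset_biUnion_left fun i (hi : i < m) => hi.trans_le hmn)
  exact huniv n (univ_subset_iff.1 hn ▸ hmem n)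

end Obstruction

section Reflection

variable {κ : Cardinal.{1}} {M : Language.graph.ElementarySubstructure (HKappa κ)}
  {α : Type*} [TopologicalSpace α] [Coding M α] [SmallCoding M α] [SmallCoding M (Set α)]

theorem sUnion_sep_isCodedIn [CompactSpace α] {U : Set (Set α)} (hU : IsOpenCover U)
    (hUM : IsCodedIn M U) : ⋃₀ {O ∈ U | IsCodedIn M O} = univ := by
  obtain ⟨n, f, hf⟩ := exists_fin_iUnion_eq_univ (fun O : U => hU.1 O O.2)
    (sUnion_eq_iUnion.symm.trans hU.2)
  have hdef : DefinablePred M fun W : Fin n → Set α => (∀ j, W j ∈ U) ∧ ∀ x, ∃ j, x ∈ W j :=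
    .and (.forall_finite fun j =>
        .mem (isDefinableMap_id.apply j) (isDefinableMap_const hUM))
      (.forall' (.exists_finite fun j =>
        .mem isDefinableMap_id.snd (isDefinableMap_id.fst.apply j)))
  obtain ⟨W, hWM, hWU, hWcover⟩ :=
    hdef.exists_isCodedIn ⟨fun j => f j, fun j => (f j).2, iUnion_eq_univ_iff.1 hf⟩
  exact sUnion_eq_univ_iff.2 fun x =>
    (hWcover x).imp' W fun j hx => ⟨⟨hWU j, isCodedIn_pi.1 hWM j⟩, hx⟩

theorem definablePred_isOpenCover (hopen : DefinablePred M (IsOpen : Set α → Prop)) :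
    DefinablePred M fun U : Set (Set α) => IsOpenCover U := by
  have h : DefinablePred M fun U : Set (Set α) =>
      (∀ s, s ∈ U → IsOpen s) ∧ ∀ x, ∃ s, s ∈ U ∧ x ∈ s :=
    .and (.forall' (.imp (.mem isDefinableMap_id.snd isDefinableMap_id.fst)
      (hopen.comp isDefinableMap_id.snd)))
      (.forall' (.exists' (.and (.mem isDefinableMap_id.snd isDefinableMap_id.fst.fst)
        (.mem isDefinableMap_id.fst.snd isDefinableMap_id.snd))))
  simp only [← sUnion_eq_univ_iff] at h
  exact h

theorem definablePred_isDisjointOpenRefinement (hopen : DefinablePred M (IsOpen : Set α → Prop)) :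
    DefinablePred M fun p : Set (Set α) × Set (Set α) => IsDisjointOpenRefinement p.1 p.2 := by
  have h : DefinablePred M fun p : Set (Set α) × Set (Set α) =>
      (∀ s, s ∈ p.1 → IsOpen s) ∧
      (∀ s, s ∈ p.1 → ∀ t, t ∈ p.1 → s ≠ t → ∀ x, x ∈ s → x ∉ t) ∧
      ∀ v, v ∈ p.1 → ∃ u, u ∈ p.2 ∧ ∀ x, x ∈ v → x ∈ u :=
    .and (.forall' (.imp (.mem isDefinableMap_id.snd isDefinableMap_id.fst.fst)
      (hopen.comp isDefinableMap_id.snd))) <|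
    .and (.forall' <| .imp (.mem isDefinableMap_id.snd isDefinableMap_id.fst.fst) <|
      .forall' <| .imp (.mem isDefinableMap_id.snd isDefinableMap_id.fst.fst.fst) <|
      .imp (.not (.eq isDefinableMap_id.fst.snd isDefinableMap_id.snd)) <|
      .forall' <| .imp (.mem isDefinableMap_id.snd isDefinableMap_id.fst.fst.snd) <|
      .not (.mem isDefinableMap_id.snd isDefinableMap_id.fst.snd)) <|
    .forall' <| .imp (.mem isDefinableMap_id.snd isDefinableMap_id.fst.fst) <|
      .exists' <| .and (.mem isDefinableMap_id.snd isDefinableMap_id.fst.fst.snd) <|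
      .forall' <| .imp (.mem isDefinableMap_id.snd isDefinableMap_id.fst.fst.snd) <|
      .mem isDefinableMap_id.snd isDefinableMap_id.fst.snd
  simp only [← Set.disjoint_left] at h
  exact h

theorem definablePred_extendsAlong (hopen : DefinablePred M (IsOpen : Set α → Prop)) :
    DefinablePred M fun p : (Set (Set α) × Set (Set α)) × Set (Set α) =>
      ExtendsAlong p.1.1 p.1.2 p.2 :=
  .forall' <| .imp ((definablePred_isDisjointOpenRefinement hopen).comp
      (isDefinableMap_id.snd.prodMk isDefinableMap_id.fst.fst.fst)) <|
    .forall' <| .imp (.mem isDefinableMap_id.snd isDefinableMap_id.fst.fst.fst.snd) <|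
      definablePred_union_sUnion_mem.comp
        ((isDefinableMap_id.snd.prodMk isDefinableMap_id.fst.snd).prodMk
          isDefinableMap_id.fst.fst.snd)

variable [SmallCoding M (Set (Set α))]

theorem definablePred_isOpenCover_and_extendsAlong
    (hopen : DefinablePred M (IsOpen : Set α → Prop)) :
    DefinablePred M fun q : (Set (Set (Set α)) × Set (Set α)) × (Set (Set α) × Set (Set α)) =>
      IsOpenCover q.2.1 ∧ q.2.2 ∈ q.1.1 ∧ ExtendsAlong q.2.1 q.1.2 q.2.2 :=
  .and ((definablePred_isOpenCover hopen).comp isDefinableMap_id.snd.fst) <|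
    .and (.mem isDefinableMap_id.snd.snd isDefinableMap_id.fst.fst) <|
    (definablePred_extendsAlong hopen).comp
      ((isDefinableMap_id.snd.fst.prodMk isDefinableMap_id.fst.snd).prodMk
        isDefinableMap_id.snd.snd)

theorem definablePred_isObstruction (hopen : DefinablePred M (IsOpen : Set α → Prop)) :
    DefinablePred M fun 𝒮 : Set (Set (Set α)) => IsObstruction 𝒮 :=
  have hempty : IsCodedIn M (∅ : Set α) := (DefinablePred.const False).isCodedIn_setOf
  have huniv : IsCodedIn M (univ : Set α) := (DefinablePred.const True).isCodedIn_setOf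
  .and (.exists' <| .and (.mem isDefinableMap_id.snd isDefinableMap_id.fst)
    (.mem (isDefinableMap_const hempty) isDefinableMap_id.snd)) <|
  .and (.forall' <| .imp (.mem isDefinableMap_id.snd isDefinableMap_id.fst)
    (.not <| .mem (isDefinableMap_const huniv) isDefinableMap_id.snd)) <|
  .forall' <| .imp (.mem isDefinableMap_id.snd isDefinableMap_id.fst) <|
    .exists' (definablePred_isOpenCover_and_extendsAlong hopen)

theorem exists_coded_extendsAlong (hopen : DefinablePred M (IsOpen : Set α → Prop))
    (hC : ¬IsCSpace α) : ∃ U K : ℕ → Set (Set α), (∀ n, IsOpenCover (U n)) ∧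
      (∀ n, IsCodedIn M (U n)) ∧ ∅ ∈ K 0 ∧ (∀ n, univ ∉ K n) ∧
      ∀ n, ExtendsAlong (U n) (K n) (K (n + 1)) := by
  obtain ⟨𝒮, h𝒮M, hstart, huniv, hext⟩ :=
    (definablePred_isObstruction hopen).exists_isCodedIn (exists_isObstruction hC)
  obtain ⟨K₀, hK₀M, hK₀, hempty⟩ := DefinablePred.exists_isCodedIn
    (.and (.mem isDefinableMap_id (isDefinableMap_const h𝒮M))
      (.mem (isDefinableMap_const (DefinablePred.const False).isCodedIn_setOf) isDefinableMap_id))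
    hstart
  have hstep (K : {K // K ∈ 𝒮 ∧ IsCodedIn M K}) :
      ∃ (U : Set (Set α)) (K' : {K // K ∈ 𝒮 ∧ IsCodedIn M K}),
        IsOpenCover U ∧ IsCodedIn M U ∧ ExtendsAlong U K K' := by
    obtain ⟨⟨U, K'⟩, hM, hU, hK', hK⟩ := DefinablePred.exists_isCodedIn
      ((definablePred_isOpenCover_and_extendsAlong hopen).comp
        ((isDefinableMap_const (t := (𝒮, K.1)) (isCodedIn_prod.2 ⟨h𝒮M, K.2.2⟩)).prodMk
          isDefinableMap_id))
      (hext K K.2.1)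
    obtain ⟨hUM, hKM⟩ := isCodedIn_prod.1 hM
    exact ⟨U, ⟨K', hK', hKM⟩, hU, hUM, hK⟩
  choose U next hU hUM hext using hstep
  let K (n : ℕ) : {K // K ∈ 𝒮 ∧ IsCodedIn M K} := Nat.rec ⟨K₀, hK₀, hK₀M⟩ (fun _ => next) n
  exact ⟨fun n => U (K n), fun n => (K n).1, fun n => hU _, fun n => hUM _, hempty,
    fun n => huniv _ (K n).2.1, fun n => hext (K n)⟩

theorem IsCSpace.of_wallman_closedTrace [CompactSpace α] [NormalSpace α]
    (hopen : DefinablePred M (IsOpen : Set α → Prop)) (hC : IsCSpace (LUltra (closedTrace M α))) :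
    IsCSpace α := by
  by_contra hα
  obtain ⟨U, K, hU, hUM, hempty, huniv, hext⟩ := exists_coded_extendsAlong hopen hα
  obtain ⟨V, hV, hcover⟩ := hC.exists_refinements_of_wallman (isNormalLattice_closedTrace hopen)
    (fun a ha => ha.1) (U := fun n => {O ∈ U n | IsCodedIn M O})
    (fun n O hO => compl_mem_closedTrace_iff.2 ⟨(hU n).1 O hO.1, hO.2⟩)
    (fun n => sUnion_sep_isCodedIn (hU n) (hUM n))
  exact iUnion_sUnion_ne_univ hempty huniv hext
    (fun n => (hV n).mono (sep_subset _ _)) hcover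

theorem isCSpace_iff_wallman_closedTrace [CompactSpace α] [NormalSpace α]
    (hopen : DefinablePred M (IsOpen : Set α → Prop)) :
    IsCSpace α ↔ IsCSpace (LUltra (closedTrace M α)) :=
  ⟨.wallman (isNormalLattice_closedTrace hopen) (fun _ ha => ha.1)
    (reflectsShrinkings_closedTrace hopen), .of_wallman_closedTrace hopen⟩

end Reflection

section Space

variable {X : ZFSet.{0}} {κ : Cardinal.{1}}
  {M : Language.graph.ElementarySubstructure (HKappa κ)}

theorem memOf_coe_iff {x : HKappa κ} : MemOf κ M x ↔ x ∈ M :=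
  ⟨fun ⟨_, h⟩ => h, fun h => ⟨x.2, h⟩⟩

theorem Coding.code_mem_powerset {T : Type*} [Coding M T] [SmallCoding M T] {y : ZFSet.{0}}
    (hy : ∀ t : T, (code M t : ZFSet.{0}) ∈ y) (A : Set T) :
    (code M A : ZFSet.{0}) ∈ y.powerset := by
  refine ZFSet.mem_powerset.2 fun z hz => ?_
  have hzA : (⟨z, (code M A).2.of_mem hz⟩ : HKappa κ) ∈ image M A := hz
  obtain ⟨t, -, ht⟩ := mem_image.1 hzA
  have hz' : (code M t : ZFSet.{0}) = z := congrArg Subtype.val ht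
  exact hz' ▸ hy t

variable [hXM : Fact (MemOf κ M X)]

instance : Coding M ↥X.toSet where
  code x := ⟨x, hXM.out.1.of_mem x.2⟩
  code_injective _ _ h := Subtype.ext (Subtype.mk.inj h)
  definablePred_mem_range_code := by
    obtain ⟨hX, hM⟩ := hXM.out
    have h : DefinablePred M fun x : HKappa κ => x ∈ (⟨X, hX⟩ : HKappa κ) :=
      .hKappa_mem isDefinableMap_id (isDefinableMap_const fun _ => hM)
    convert h with x
    exact ⟨fun ⟨p, hp⟩ => hp ▸ p.2, fun hx => ⟨⟨x, hx⟩, rfl⟩⟩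

instance : SmallCoding M ↥X.toSet :=
  ⟨⟨X, hXM.out.1⟩, fun x => x.2⟩

theorem code_set_mem_powerset (A : Set ↥X.toSet) :
    (Coding.code M A : ZFSet.{0}) ∈ X.powerset :=
  Coding.code_mem_powerset (fun x => x.2) A

theorem decodeSet_code (A : Set ↥X.toSet) : decodeSet X (Coding.code M A) = A :=
  Set.ext fun _ => Coding.code_mem_code (M := M)

theorem codeSet_eq_code (A : Set ↥X.toSet) : codeSet X A = Coding.code M A := by
  ext z
  rw [codeSet, ZFSet.mem_sep]
  constructor
  · rintro ⟨_, _, hzA⟩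
    exact Coding.code_mem_code (M := M).2 hzA
  · intro hz
    have hzX : z ∈ X := ZFSet.mem_powerset.1 (code_set_mem_powerset A) hz
    exact ⟨hzX, hzX, Coding.code_mem_code (M := M).1 hz⟩

variable [hbig : Fact (HeredLt κ X.powerset.powerset)]

instance : SmallCoding M (Set ↥X.toSet) :=
  ⟨⟨X.powerset, hbig.out.of_mem (ZFSet.mem_powerset.2 fun _ h => h)⟩, code_set_mem_powerset⟩

instance : SmallCoding M (Set (Set ↥X.toSet)) :=
  ⟨⟨X.powerset.powerset, hbig.out⟩, Coding.code_mem_powerset code_set_mem_powerset⟩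

variable [TopologicalSpace ↥X.toSet]

omit hbig in
theorem Lfam_eq_closedTrace : Lfam X κ M = closedTrace M ↥X.toSet :=
  Set.ext fun A => and_congr_right fun _ => by
    rw [codeSet_eq_code (M := M), memOf_coe_iff, Coding.isCodedIn_iff]

omit hbig in
theorem definablePred_isOpen (htopM : MemOf κ M (opensZ X)) :
    DefinablePred M (IsOpen : Set ↥X.toSet → Prop) := by
  obtain ⟨htop, hM⟩ := htopM
  have h : DefinablePred M fun A : Set ↥X.toSet =>
      Coding.code M A ∈ (⟨opensZ X, htop⟩ : HKappa κ) :=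
    .hKappa_mem Coding.isDefinableMap_code (isDefinableMap_const fun _ => hM)
  convert h with A
  change _ ↔ (Coding.code M A : ZFSet.{0}) ∈ opensZ X
  rw [opensZ, ZFSet.mem_sep, decodeSet_code, and_iff_right (code_set_mem_powerset A)]

end Space

theorem isCSpace_iff_wallman_general (X : ZFSet.{0}) [TopologicalSpace ↥X.toSet]
    [CompactSpace ↥X.toSet] [NormalSpace ↥X.toSet] (κ : Cardinal.{1})
    (hbig : HeredLt κ X.powerset.powerset)
    (M : FirstOrder.Language.graph.ElementarySubstructure (HKappa κ))
    (hXM : MemOf κ M X) (htopM : MemOf κ M (opensZ X)) :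
    IsCSpace ↥X.toSet ↔ IsCSpace (LUltra (Lfam X κ M)) := by
  have : Fact (MemOf κ M X) := ⟨hXM⟩
  have : Fact (HeredLt κ X.powerset.powerset) := ⟨hbig⟩
  rw [Lfam_eq_closedTrace]
  exact isCSpace_iff_wallman_closedTrace (definablePred_isOpen htopM)

/-- For a compact Hausdorff space `X` and a countable elementary submodel
`M ≺ H(κ)` with `X ∈ M`, with `L = 2^X ∩ M`, the space `X` is a C-space iff the Wallman
space `wL` is a C-space. -/
theorem isCSpace_iff_wallman
    (X : ZFSet.{0}) [TopologicalSpace ↥X.toSet] [CompactSpace ↥X.toSet]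
    [T2Space ↥X.toSet]
    (κ : Cardinal.{1}) (hreg : κ.IsRegular) (hbig : HeredLt κ X.powerset.powerset)
    (M : FirstOrder.Language.graph.ElementarySubstructure (HKappa κ))
    (hMcount : Countable M) (hXM : MemOf κ M X) (htopM : MemOf κ M (opensZ X)) :
    IsCSpace ↥X.toSet ↔ IsCSpace (LUltra (Lfam X κ M)) :=
  isCSpace_iff_wallman_general X κ hbig M hXM htopM
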